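/- Let L ∈ L_{2,2} be a quantum channel from 2×2 to 2×2 complex matrices with rank Z(L) ≤ 2, and suppose L is not unital, i.e. L(I_2) ≠ I_2. Then L is an extreme point of L_{2,2}. -/

import Mathlib

open Matrix
open scoped ComplexOrder

/-- The Choi matrix of a linear map `L` from `m × m` to `n × n` complex matrices:
its `((i,p),(j,q))` entry is the `(p,q)` entry of `L(E_{ij})`. -/
def choi (m n : ℕ) (L : Matrix (Fin m) (Fin m) ℂ →ₗ[ℂ] Matrix (Fin n) (Fin n) ℂ) :
    Matrix (Fin m × Fin n) (Fin m × Fin n) ℂ :=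
  Matrix.of fun ip jq => L (Matrix.single ip.1 jq.1 (1 : ℂ)) ip.2 jq.2

/-- `L` is a quantum channel: it admits a Kraus representation
`L(X) = ∑ Aᵢ X Aᵢ*` with `∑ Aᵢ* Aᵢ = I`. -/
def IsChannel (m n : ℕ) (L : Matrix (Fin m) (Fin m) ℂ →ₗ[ℂ] Matrix (Fin n) (Fin n) ℂ) : Prop :=
  ∃ (k : ℕ) (A : Fin k → Matrix (Fin n) (Fin m) ℂ),
    (∀ X, L X = ∑ i, A i * X * (A i)ᴴ) ∧ ∑ i, (A i)ᴴ * A i = 1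

/-- `L` is an extreme point of the convex set of quantum channels. -/
def IsExtremeChannel (m n : ℕ)
    (L : Matrix (Fin m) (Fin m) ℂ →ₗ[ℂ] Matrix (Fin n) (Fin n) ℂ) : Prop :=
  IsChannel m n L ∧
    ∀ L₁ L₂ : Matrix (Fin m) (Fin m) ℂ →ₗ[ℂ] Matrix (Fin n) (Fin n) ℂ,
      IsChannel m n L₁ → IsChannel m n L₂ → ∀ t : ℝ, 0 < t → t < 1 →
      L = (t : ℂ) • L₁ + ((1 - t : ℝ) : ℂ) • L₂ → L₁ = L ∧ L₂ = L

/-!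
Suppose `L = t L₁ + (1 - t) L₂`. Then `Z(L₁)` is dominated by a multiple of `Z(L)`, so it is
supported on the range of `Z(L)`, and diagonalising it there relative to `Z(L)` gives common Kraus
operators: `L(X) = ∑ Aₖ X Aₖ*` and `L₁(X) = ∑ dₖ Aₖ X Aₖ*`, with at most two terms. Trace
preservation says `∑ Aₖ* Aₖ = 1 = ∑ dₖ Aₖ* Aₖ`. If `d` is constant, it is `1` and `L₁ = L`.
Otherwise there are two terms and the equations can be solved for `A₁* A₁` and `A₂* A₂`, which are
therefore scalar: `A₁` and `A₂` are multiples of unitaries, so `∑ Aₖ Aₖ* = 1` too and `L` is unital.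
-/

section LinearAlgebra

lemma submatrix_mul_submatrix_of_col_eq_zero {R l m n p : Type*} [NonUnitalNonAssocSemiring R]
    [Fintype m] [Fintype n] {A : Matrix l n R} {B : Matrix n p R} {f : m → n}
    (hf : Function.Injective f) (hA : ∀ k ∉ Set.range f, ∀ i, A i k = 0) :
    A.submatrix id f * B.submatrix f id = A * B := by
  ext i j
  exact Fintype.sum_of_injective f hf _ _ (fun k hk => mul_eq_zero_of_left (hA k hk i) _)
    fun _ => rfl

lemma isUnit_of_rank_eq_card {K n : Type*} [Field K] [Fintype n] [DecidableEq n]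
    {M : Matrix n n K} (h : M.rank = Fintype.card n) : IsUnit M := by
  rw [← linearIndependent_cols_iff_isUnit, linearIndependent_iff_card_eq_finrank_span, ← h,
    rank_eq_finrank_span_cols, Set.finrank]

variable {𝕜 n κ : Type*} [RCLike 𝕜] [Fintype n] [Fintype κ]

lemma mulVec_eq_zero_of_posSemidef_sub_smul {M N : Matrix n n 𝕜} (hN : N.PosSemidef) {c : 𝕜}
    (hc : 0 < c) (hle : (M - c • N).PosSemidef) {x : n → 𝕜} (hx : M *ᵥ x = 0) : N *ᵥ x = 0 := by
  rw [← hN.dotProduct_mulVec_zero_iff]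
  have hneg : 0 ≤ -(c * (star x ⬝ᵥ N *ᵥ x)) := by
    simpa only [sub_mulVec, hx, zero_sub, dotProduct_neg, smul_mulVec, dotProduct_smul,
      smul_eq_mul] using hle.dotProduct_mulVec_nonneg x
  have hpos : 0 ≤ c * (star x ⬝ᵥ N *ᵥ x) := mul_nonneg hc.le (hN.dotProduct_mulVec_nonneg x)
  exact (mul_eq_zero.1 (le_antisymm (neg_nonneg.1 hneg) hpos)).resolve_left hc.ne'

lemma eq_mul_diagonal_mul_conjTranspose_of_isHermitian [DecidableEq n] {M : Matrix n n 𝕜}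
    (hM : M.IsHermitian) :
    M = (hM.eigenvectorUnitary : Matrix n n 𝕜) * diagonal (fun i => (hM.eigenvalues i : 𝕜)) *
      (hM.eigenvectorUnitary : Matrix n n 𝕜)ᴴ := by
  simpa only [Unitary.conjStarAlgAut_apply, Function.comp_def, star_eq_conjTranspose] using
    hM.spectral_theorem

lemma exists_eq_mul_conjTranspose_of_posSemidef {M : Matrix n n 𝕜} (hM : M.PosSemidef) :
    ∃ S : Matrix n (Fin M.rank) 𝕜, M = S * Sᴴ := by
  classical
  let ev := hM.isHermitian.eigenvalues
  let U : Matrix n n 𝕜 := hM.isHermitian.eigenvectorUnitary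
  let e : Fin M.rank ≃ {i // ev i ≠ 0} :=
    Fintype.equivOfCardEq (by rw [Fintype.card_fin, hM.isHermitian.rank_eq_card_non_zero_eigs])
  let B : Matrix n n 𝕜 := U * diagonal fun i => (√(ev i) : 𝕜)
  have hMB : M = B * Bᴴ := by
    have hsqrt : (diagonal fun i => (ev i : 𝕜)) =
        (diagonal fun i => (√(ev i) : 𝕜)) * (diagonal fun i => (√(ev i) : 𝕜))ᴴ := by
      rw [diagonal_conjTranspose, diagonal_mul_diagonal]
      congr! 2 with i
      simp only [Pi.star_apply, RCLike.star_def, RCLike.conj_ofReal, ← RCLike.ofReal_mul,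
        Real.mul_self_sqrt (hM.eigenvalues_nonneg i), ev]
    rw [conjTranspose_mul, Matrix.mul_assoc, ← Matrix.mul_assoc (diagonal _), ← hsqrt,
      ← Matrix.mul_assoc]
    exact eq_mul_diagonal_mul_conjTranspose_of_isHermitian hM.isHermitian
  have hB : ∀ k ∉ Set.range (Subtype.val ∘ e), ∀ i, B i k = 0 := by
    intro k hk i
    have hevk : ev k = 0 := by
      by_contra h
      exact hk ⟨e.symm ⟨k, h⟩, by simp⟩
    simp [B, mul_diagonal, hevk]
  refine ⟨B.submatrix id (Subtype.val ∘ e), ?_⟩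
  rw [conjTranspose_submatrix,
    submatrix_mul_submatrix_of_col_eq_zero (Subtype.val_injective.comp e.injective) hB, ← hMB]

lemma exists_isHermitian_eq_mul_mul_conjTranspose [DecidableEq κ] {N : Matrix n n 𝕜}
    (hN : N.IsHermitian) {S T : Matrix n κ 𝕜} (hST : Sᴴ * T = 1)
    (hker : ∀ x, Sᴴ *ᵥ x = 0 → N *ᵥ x = 0) :
    ∃ G : Matrix κ κ 𝕜, G.IsHermitian ∧ N = S * G * Sᴴ := by
  classical
  have hNT : N = N * (T * Sᴴ) := by
    refine ext_of_mulVec_single fun i => ?_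
    rw [← sub_eq_zero, ← mulVec_mulVec, ← mulVec_sub]
    refine hker _ ?_
    rw [mulVec_sub, mulVec_mulVec, ← Matrix.mul_assoc, hST, Matrix.one_mul, sub_self]
  have hTN : N = S * Tᴴ * N := by
    simpa only [conjTranspose_mul, conjTranspose_conjTranspose, hN.eq] using
      congrArg conjTranspose hNT
  refine ⟨Tᴴ * N * T, isHermitian_conjTranspose_mul_mul T hN, ?_⟩
  calc N = S * Tᴴ * (N * (T * Sᴴ)) := by rw [← hNT, ← hTN]
    _ = S * (Tᴴ * N * T) * Sᴴ := by simp only [Matrix.mul_assoc]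

lemma exists_simultaneous_diagonalization {M N : Matrix n n 𝕜} (hN : N.PosSemidef) {c : 𝕜}
    (hc : 0 < c) (hle : (M - c • N).PosSemidef) :
    ∃ (W : Matrix n (Fin M.rank) 𝕜) (d : Fin M.rank → 𝕜),
      M = W * Wᴴ ∧ N = W * diagonal d * Wᴴ := by
  have hM : M.PosSemidef := by simpa only [sub_add_cancel] using hle.add (hN.smul hc.le)
  obtain ⟨S, hS⟩ := exists_eq_mul_conjTranspose_of_posSemidef hM
  have hunit : IsUnit (Sᴴ * S) := isUnit_of_rank_eq_card <| by
    rw [rank_conjTranspose_mul_self, ← rank_self_mul_conjTranspose, ← hS, Fintype.card_fin]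
  have hST : Sᴴ * (S * (Sᴴ * S)⁻¹) = 1 := by
    rw [← Matrix.mul_assoc, mul_nonsing_inv _ ((isUnit_iff_isUnit_det _).1 hunit)]
  have hker : ∀ x, Sᴴ *ᵥ x = 0 → N *ᵥ x = 0 := fun x hx =>
    mulVec_eq_zero_of_posSemidef_sub_smul hN hc hle <| by
      rw [hS, ← mulVec_mulVec, hx, mulVec_zero]
  obtain ⟨G, hG, hNG⟩ := exists_isHermitian_eq_mul_mul_conjTranspose hN.isHermitian hST hker
  let U : Matrix (Fin M.rank) (Fin M.rank) 𝕜 := hG.eigenvectorUnitary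
  refine ⟨S * U, fun k => hG.eigenvalues k, ?_, ?_⟩
  · have hU : U * Uᴴ = 1 := Unitary.coe_mul_star_self hG.eigenvectorUnitary
    rw [conjTranspose_mul, Matrix.mul_assoc, ← Matrix.mul_assoc U, hU, Matrix.one_mul]
    exact hS
  · calc N = S * (U * diagonal (fun k => (hG.eigenvalues k : 𝕜)) * Uᴴ) * Sᴴ := by
          rw [← eq_mul_diagonal_mul_conjTranspose_of_isHermitian hG, ← hNG]
      _ = S * U * diagonal (fun k => (hG.eigenvalues k : 𝕜)) * (S * U)ᴴ := by
          simp only [conjTranspose_mul, Matrix.mul_assoc]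

lemma mul_conjTranspose_eq_smul_one [DecidableEq n] {B : Matrix n n 𝕜} {a : 𝕜}
    (h : Bᴴ * B = a • (1 : Matrix n n 𝕜)) : B * Bᴴ = a • (1 : Matrix n n 𝕜) := by
  obtain rfl | ha := eq_or_ne a 0
  · rw [zero_smul, conjTranspose_mul_self_eq_zero] at h
    rw [h, Matrix.zero_mul, zero_smul]
  · have hinv : (a⁻¹ • Bᴴ) * B = 1 := by rw [Matrix.smul_mul, h, inv_smul_smul₀ ha]
    rw [← inv_smul_eq_iff₀ ha, ← Matrix.mul_smul, mul_eq_one_comm.1 hinv]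

lemma sum_mul_conjTranspose_eq_one [DecidableEq n] (hκ : Fintype.card κ ≤ 2)
    {A : κ → Matrix n n 𝕜} {d : κ → 𝕜} (hone : ∑ k, (A k)ᴴ * A k = 1)
    (hd : ∑ k, d k • ((A k)ᴴ * A k) = 1) {i j : κ} (hij : d i ≠ d j) : ∑ k, A k * (A k)ᴴ = 1 := by
  classical
  have hne : i ≠ j := ne_of_apply_ne d hij
  have huniv : (Finset.univ : Finset κ) = {i, j} :=
    (Finset.eq_of_subset_of_card_le (Finset.subset_univ _) <| by
      rwa [Finset.card_pair hne, Finset.card_univ]).symm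
  have hsub : d i - d j ≠ 0 := sub_ne_zero.2 hij
  rw [huniv, Finset.sum_pair hne] at hone hd ⊢
  have hi : (A i)ᴴ * A i = ((1 - d j) / (d i - d j)) • (1 : Matrix n n 𝕜) := by
    rw [div_eq_inv_mul, mul_smul, eq_inv_smul_iff₀ hsub]
    linear_combination (norm := module) hd - d j • hone
  have hj : (A j)ᴴ * A j = ((d i - 1) / (d i - d j)) • (1 : Matrix n n 𝕜) := by
    rw [div_eq_inv_mul, mul_smul, eq_inv_smul_iff₀ hsub]
    linear_combination (norm := module) d i • hone - hd
  have hweights : (1 - d j) / (d i - d j) + (d i - 1) / (d i - d j) = 1 := by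
    field_simp
    ring
  rw [mul_conjTranspose_eq_smul_one hi, mul_conjTranspose_eq_smul_one hj, ← add_smul, hweights,
    one_smul]

end LinearAlgebra

section Kraus

variable {m n : ℕ} {κ : Type*}

/-- The matrix whose `k`-th column is the vectorisation of the Kraus operator `Aₖ`, so that
`krausColumns A * (krausColumns A)ᴴ` is the Choi matrix of `X ↦ ∑ Aₖ X Aₖ*`. -/
def krausColumns (A : κ → Matrix (Fin n) (Fin m) ℂ) : Matrix (Fin m × Fin n) κ ℂ :=
  Matrix.of fun ip k => (A k).vec ip

lemma krausColumns_surjective :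
    Function.Surjective (krausColumns : (κ → Matrix (Fin n) (Fin m) ℂ) → _) :=
  fun W => ⟨fun k => Matrix.of fun p i => W (i, p) k, rfl⟩

variable [Fintype κ]

/-- The map `X ↦ ∑ dₖ Aₖ X Aₖ*` with Kraus operators `A` and complex weights `d`. The weights let
several maps be written with the same operators. -/
def krausMap (A : κ → Matrix (Fin n) (Fin m) ℂ) (d : κ → ℂ) :
    Matrix (Fin m) (Fin m) ℂ →ₗ[ℂ] Matrix (Fin n) (Fin n) ℂ :=
  ∑ k, d k • (mulRightLinearMap (Fin n) ℂ (A k)ᴴ ∘ₗ mulLeftLinearMap (Fin m) ℂ (A k))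

lemma krausMap_apply (A : κ → Matrix (Fin n) (Fin m) ℂ) (d : κ → ℂ)
    (X : Matrix (Fin m) (Fin m) ℂ) : krausMap A d X = ∑ k, d k • (A k * X * (A k)ᴴ) := by
  simp [krausMap]

lemma choi_krausMap [DecidableEq κ] (A : κ → Matrix (Fin n) (Fin m) ℂ) (d : κ → ℂ) :
    choi m n (krausMap A d) = krausColumns A * diagonal d * (krausColumns A)ᴴ := by
  ext ⟨i, p⟩ ⟨j, q⟩
  rw [choi, of_apply, krausMap_apply, Matrix.sum_apply, Matrix.mul_apply]
  refine Finset.sum_congr rfl fun k _ => ?_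
  have hentry : (A k * single i j (1 : ℂ) * (A k)ᴴ) p q = A k p i * star (A k q j) := by
    simp [Matrix.mul_apply, single_apply, ite_and]
  rw [Matrix.smul_apply, hentry, mul_diagonal, smul_eq_mul, mul_left_comm, ← mul_assoc]
  rfl

lemma choi_injective (m n : ℕ) : Function.Injective (choi m n) := fun L L' h =>
  ext_linearMap ℂ fun i j => by
    ext p q
    simpa [choi] using congrFun (congrFun h (i, p)) (j, q)

lemma exists_common_krausMap {L L₁ : Matrix (Fin m) (Fin m) ℂ →ₗ[ℂ] Matrix (Fin n) (Fin n) ℂ}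
    (hL₁ : (choi m n L₁).PosSemidef) {c : ℂ} (hc : 0 < c)
    (hle : (choi m n L - c • choi m n L₁).PosSemidef) :
    ∃ (A : Fin (choi m n L).rank → Matrix (Fin n) (Fin m) ℂ) (d : Fin (choi m n L).rank → ℂ),
      L = krausMap A 1 ∧ L₁ = krausMap A d := by
  obtain ⟨W, d, hW, hWd⟩ := exists_simultaneous_diagonalization hL₁ hc hle
  obtain ⟨A, rfl⟩ := krausColumns_surjective W
  refine ⟨A, d, choi_injective m n ?_, choi_injective m n ?_⟩
  · rw [choi_krausMap, Pi.one_def, diagonal_one, Matrix.mul_one, ← hW]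
  · rw [choi_krausMap, ← hWd]

lemma trace_krausMap (A : κ → Matrix (Fin n) (Fin m) ℂ) (d : κ → ℂ)
    (X : Matrix (Fin m) (Fin m) ℂ) :
    (krausMap A d X).trace = ((∑ k, d k • ((A k)ᴴ * A k)) * X).trace := by
  simp only [krausMap_apply, Matrix.sum_mul, trace_sum, Matrix.smul_mul, trace_smul]
  exact Finset.sum_congr rfl fun k _ => by rw [trace_mul_comm, ← Matrix.mul_assoc]

namespace IsChannel

variable {L : Matrix (Fin m) (Fin m) ℂ →ₗ[ℂ] Matrix (Fin n) (Fin n) ℂ}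

lemma exists_eq_krausMap (hL : IsChannel m n L) :
    ∃ (k : ℕ) (A : Fin k → Matrix (Fin n) (Fin m) ℂ),
      L = krausMap A 1 ∧ ∑ i, (A i)ᴴ * A i = 1 := by
  obtain ⟨k, A, hA, hone⟩ := hL
  exact ⟨k, A, LinearMap.ext fun X => by simp [hA, krausMap_apply], hone⟩

lemma trace_apply (hL : IsChannel m n L) (X : Matrix (Fin m) (Fin m) ℂ) :
    (L X).trace = X.trace := by
  obtain ⟨k, A, rfl, hone⟩ := hL.exists_eq_krausMap
  simp [trace_krausMap, hone]

lemma posSemidef_choi (hL : IsChannel m n L) : (choi m n L).PosSemidef := by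
  obtain ⟨k, A, rfl, -⟩ := hL.exists_eq_krausMap
  rw [choi_krausMap, Pi.one_def, diagonal_one, Matrix.mul_one]
  exact posSemidef_self_mul_conjTranspose _

lemma sum_smul_conjTranspose_mul_self {A : κ → Matrix (Fin n) (Fin m) ℂ} {d : κ → ℂ}
    (h : IsChannel m n (krausMap A d)) : ∑ k, d k • ((A k)ᴴ * A k) = 1 :=
  ext_iff_trace_mul_right.2 fun X => by rw [← trace_krausMap, h.trace_apply, Matrix.one_mul]

end IsChannel

lemma krausMap_const_eq_krausMap_one {A : κ → Matrix (Fin n) (Fin m) ℂ} {c : ℂ}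
    (hone : ∑ k, (A k)ᴴ * A k = 1) (hc : ∑ k, c • ((A k)ᴴ * A k) = 1) :
    krausMap A (fun _ => c) = krausMap A 1 := by
  rw [← Finset.smul_sum, hone] at hc
  refine LinearMap.ext fun X => ?_
  calc krausMap A (fun _ => c) X = krausMap A 1 (c • X) := by
        simp only [krausMap_apply, Pi.one_apply, one_smul, Matrix.mul_smul, Matrix.smul_mul]
    _ = krausMap A 1 X := by rw [← Matrix.one_mul X, ← Matrix.smul_mul, hc]

lemma krausMap_apply_one_eq_one_of_ne {A : κ → Matrix (Fin n) (Fin n) ℂ} {d : κ → ℂ}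
    (hκ : Fintype.card κ ≤ 2) (hone : ∑ k, (A k)ᴴ * A k = 1)
    (hd : ∑ k, d k • ((A k)ᴴ * A k) = 1) (hne : krausMap A d ≠ krausMap A 1) :
    krausMap A 1 1 = 1 := by
  obtain ⟨i, j, hij⟩ : ∃ i j, d i ≠ d j := by
    by_contra! hconst
    obtain _ | ⟨⟨k₀⟩⟩ := isEmpty_or_nonempty κ
    · exact hne (congrArg _ (Subsingleton.elim d 1))
    obtain ⟨c, rfl⟩ : ∃ c, d = fun _ => c := ⟨d k₀, funext fun k => hconst k k₀⟩
    exact hne (krausMap_const_eq_krausMap_one hone hd)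
  simpa only [krausMap_apply, Pi.one_apply, one_smul, Matrix.mul_one] using
    sum_mul_conjTranspose_eq_one hκ hone hd hij

lemma IsChannel.eq_of_eq_smul_add_smul
    {L L₁ L₂ : Matrix (Fin n) (Fin n) ℂ →ₗ[ℂ] Matrix (Fin n) (Fin n) ℂ}
    (hL : IsChannel n n L) (hrank : (choi n n L).rank ≤ 2) (hunital : L 1 ≠ 1)
    (hL₁ : IsChannel n n L₁) (hL₂ : IsChannel n n L₂) {a b : ℂ} (ha : 0 < a) (hb : 0 ≤ b)
    (h : L = a • L₁ + b • L₂) : L₁ = L := by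
  have hle : (choi n n L - a • choi n n L₁).PosSemidef := by
    have hsub : choi n n L - a • choi n n L₁ = b • choi n n L₂ := by
      ext
      simp [choi, h]
    exact hsub ▸ hL₂.posSemidef_choi.smul hb
  obtain ⟨A, d, hLA, hL₁A⟩ := exists_common_krausMap hL₁.posSemidef_choi ha hle
  have hone : ∑ k, (A k)ᴴ * A k = 1 := by
    simpa only [Pi.one_apply, one_smul] using
      IsChannel.sum_smul_conjTranspose_mul_self (A := A) (d := 1) (hLA ▸ hL)
  have hd : ∑ k, d k • ((A k)ᴴ * A k) = 1 := (hL₁A ▸ hL₁).sum_smul_conjTranspose_mul_self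
  by_contra hne
  rw [hLA] at hunital
  rw [hLA, hL₁A] at hne
  exact hunital (krausMap_apply_one_eq_one_of_ne (by rwa [Fintype.card_fin]) hone hd hne)

end Kraus

theorem stmt19_general {n : ℕ} (L : Matrix (Fin n) (Fin n) ℂ →ₗ[ℂ] Matrix (Fin n) (Fin n) ℂ)
    (hL : IsChannel n n L) (hrank : (choi n n L).rank ≤ 2) (hunital : L 1 ≠ 1) :
    IsExtremeChannel n n L := by
  refine ⟨hL, fun L₁ L₂ hL₁ hL₂ t ht ht' h => ?_⟩
  have ha : (0 : ℂ) < t := Complex.zero_lt_real.2 ht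
  have hb : (0 : ℂ) < (1 - t : ℝ) := Complex.zero_lt_real.2 (sub_pos.2 ht')
  exact ⟨hL.eq_of_eq_smul_add_smul hrank hunital hL₁ hL₂ ha hb.le h,
    hL.eq_of_eq_smul_add_smul hrank hunital hL₂ hL₁ hb ha.le (h.trans (add_comm _ _))⟩

/-- a non-unital channel `L ∈ L_{2,2}` with `rank Z(L) ≤ 2` is an extreme point
of `L_{2,2}`. -/
theorem stmt19 (L : Matrix (Fin 2) (Fin 2) ℂ →ₗ[ℂ] Matrix (Fin 2) (Fin 2) ℂ)
    (hL : IsChannel 2 2 L) (hrank : (choi 2 2 L).rank ≤ 2)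
    (hunital : L 1 ≠ 1) :
    IsExtremeChannel 2 2 L :=
  stmt19_general L hL hrank hunital
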